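/- arXiv:1911.08239 — 2 statements merged into one kernel-verified Lean document; each statement's English description precedes it below -/
import Mathlib

section
/- Let T > 0, let E be a real Banach space, let λ : [0,T] → ℝ be continuously differentiable with λ(0) = 0 and derivative λ′, and let k : [0,T] → E be continuously differentiable with derivative k′. Then for all 0 ≤ s̄ ≤ t̄ ≤ T: ∫₀^{s̄} ( ∫₀^{t̄} [ λ′(s)·λ′(t)·k(s∧t) + λ(s∧t)·λ′(s∨t)·k′(s∧t) ] dt ) ds = 2·∫₀^{s̄} λ′(s)·λ(s)·k(s) ds + (λ(t̄) − λ(s̄))·λ(s̄)·k(s̄). -/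
open MeasureTheory intervalIntegral

/-!
No exchange of integrals is needed. For fixed `s`, split the inner integral at `t = s`. On `[0, s]`
the integrand is `λ'(s) (λ k)'(t)`, which integrates to `λ'(s) λ(s) k(s)` because `λ 0 = 0`; on
`[s, t̄]` it is `λ'(t) (λ k)'(s)`, which integrates to `(λ(t̄) - λ(s)) (λ k)'(s)`. The sum is
`2 λ'(s) λ(s) k(s)` plus the derivative of `s ↦ (λ(t̄) - λ(s)) λ(s) k(s)`, a function vanishing
at `0`, and the fundamental theorem of calculus on `[0, s̄]` finishes the proof.
-/

lemma intervalIntegrable_of_continuousOn_Icc {F : Type*} [NormedAddCommGroup F] {f : ℝ → F}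
    {T a b : ℝ} (hf : ContinuousOn f (Set.Icc 0 T)) (ha : 0 ≤ a) (hab : a ≤ b) (hb : b ≤ T) :
    IntervalIntegrable f volume a b :=
  (hf.mono (Set.Icc_subset_Icc ha hb)).intervalIntegrable_of_Icc hab

/-- The displayed double-integral computation proving identity (34)
in the proof of Proposition 3.3. -/
theorem stmt_2 {E : Type*} [NormedAddCommGroup E] [NormedSpace ℝ E] [CompleteSpace E]
    {T : ℝ} (hT : 0 < T) (lam lam' : ℝ → ℝ) (k k' : ℝ → E)
    (hlam : ∀ r ∈ Set.Icc (0:ℝ) T, HasDerivAt lam (lam' r) r)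
    (hlam' : ContinuousOn lam' (Set.Icc 0 T))
    (hlam0 : lam 0 = 0)
    (hk : ∀ r ∈ Set.Icc (0:ℝ) T, HasDerivAt k (k' r) r)
    (hk' : ContinuousOn k' (Set.Icc 0 T)) :
    ∀ sb tb : ℝ, 0 ≤ sb → sb ≤ tb → tb ≤ T →
      (∫ s in (0:ℝ)..sb, ∫ t in (0:ℝ)..tb,
          ((lam' s * lam' t) • k (min s t)
            + (lam (min s t) * lam' (max s t)) • k' (min s t)))
        = (2:ℝ) • (∫ s in (0:ℝ)..sb, (lam' s * lam s) • k s)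
          + ((lam tb - lam sb) * lam sb) • k sb := by
  intro sb tb hsb hst htT
  have hlc : ContinuousOn lam (Set.Icc 0 T) :=
    fun r hr => (hlam r hr).continuousAt.continuousWithinAt
  have hkc : ContinuousOn k (Set.Icc 0 T) :=
    fun r hr => (hk r hr).continuousAt.continuousWithinAt
  have hprod : ∀ r ∈ Set.Icc (0:ℝ) T,
      HasDerivAt (fun t => lam t • k t) (lam r • k' r + lam' r • k r) r :=
    fun r hr => (hlam r hr).smul (hk r hr)
  have hprodc : ContinuousOn (fun r => lam r • k' r + lam' r • k r) (Set.Icc 0 T) :=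
    (hlc.smul hk').add (hlam'.smul hkc)
  have inner_eq : ∀ s ∈ Set.Icc (0:ℝ) sb,
      (∫ t in (0:ℝ)..tb, ((lam' s * lam' t) • k (min s t)
            + (lam (min s t) * lam' (max s t)) • k' (min s t)))
        = (lam' s * lam s) • k s + (lam tb - lam s) • (lam s • k' s + lam' s • k s) := by
    intro s hs
    have hstb : s ≤ tb := hs.2.trans hst
    have hsT : s ≤ T := hstb.trans htT
    have e1 : Set.EqOn (fun t => (lam' s * lam' t) • k (min s t)
            + (lam (min s t) * lam' (max s t)) • k' (min s t))
          (fun t => lam' s • (lam t • k' t + lam' t • k t)) (Set.uIcc 0 s) := by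
      intro t ht
      rw [Set.uIcc_of_le hs.1] at ht
      simp only [min_eq_right ht.2, max_eq_left ht.2]
      module
    have e2 : Set.EqOn (fun t => (lam' s * lam' t) • k (min s t)
            + (lam (min s t) * lam' (max s t)) • k' (min s t))
          (fun t => lam' t • (lam s • k' s + lam' s • k s)) (Set.uIcc s tb) := by
      intro t ht
      rw [Set.uIcc_of_le hstb] at ht
      simp only [min_eq_left ht.1, max_eq_right ht.1]
      module
    have i1 : IntervalIntegrable (fun t => lam' s • (lam t • k' t + lam' t • k t)) volume 0 s :=
      intervalIntegrable_of_continuousOn_Icc (hprodc.const_smul (lam' s)) le_rfl hs.1 hsT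
    have i2 : IntervalIntegrable (fun t => lam' t • (lam s • k' s + lam' s • k s)) volume s tb :=
      intervalIntegrable_of_continuousOn_Icc (hlam'.smul (continuousOn_const (c := lam s • k' s + lam' s • k s)))
      hs.1 hstb htT
    rw [← integral_add_adjacent_intervals
        (i1.congr (e1.symm.mono Set.uIoc_subset_uIcc)) (i2.congr (e2.symm.mono Set.uIoc_subset_uIcc)),
      integral_congr e1, integral_congr e2, intervalIntegral.integral_smul,
      intervalIntegral.integral_smul_const,
      integral_eq_sub_of_hasDerivAt (f := fun t => lam t • k t) _
        (intervalIntegrable_of_continuousOn_Icc hprodc le_rfl hs.1 hsT),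
      integral_eq_sub_of_hasDerivAt (f := lam) _ (intervalIntegrable_of_continuousOn_Icc hlam' hs.1 hstb htT)]
    · simp only [hlam0]
      module
    · intro r hr
      rw [Set.uIcc_of_le hstb] at hr
      exact hlam r ⟨hs.1.trans hr.1, hr.2.trans htT⟩
    · intro r hr
      rw [Set.uIcc_of_le hs.1] at hr
      exact hprod r ⟨hr.1, hr.2.trans hsT⟩
  have hsbT : sb ≤ T := hst.trans htT
  have hG : ∀ r ∈ Set.uIcc (0:ℝ) sb,
      HasDerivAt (fun s => (lam tb - lam s) • (lam s • k s))
        ((lam tb - lam r) • (lam r • k' r + lam' r • k r) + (-lam' r) • (lam r • k r)) r := by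
    intro r hr
    rw [Set.uIcc_of_le hsb] at hr
    have hr' : r ∈ Set.Icc (0:ℝ) T := ⟨hr.1, hr.2.trans hsbT⟩
    exact ((hlam r hr').const_sub (lam tb)).smul (hprod r hr')
  have hGi : IntervalIntegrable (fun r => (lam tb - lam r) • (lam r • k' r + lam' r • k r)
      + (-lam' r) • (lam r • k r)) volume 0 sb := intervalIntegrable_of_continuousOn_Icc (((continuousOn_const (c := lam tb)).sub hlc).smul hprodc |>.add
    (hlam'.neg.smul (hlc.smul hkc))) le_rfl hsb hsbT
  have hAi : IntervalIntegrable (fun s => (2:ℝ) • ((lam' s * lam s) • k s)) volume 0 sb :=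
    intervalIntegrable_of_continuousOn_Icc (((hlam'.mul hlc).smul hkc).const_smul (2:ℝ)) le_rfl hsb hsbT
  have e3 : Set.EqOn (fun s => ∫ t in (0:ℝ)..tb, ((lam' s * lam' t) • k (min s t)
            + (lam (min s t) * lam' (max s t)) • k' (min s t)))
      (fun s => (2:ℝ) • ((lam' s * lam s) • k s) +
        ((lam tb - lam s) • (lam s • k' s + lam' s • k s) + (-lam' s) • (lam s • k s)))
      (Set.uIcc 0 sb) := by
    intro s hs
    rw [Set.uIcc_of_le hsb] at hs
    simp only [inner_eq s hs]
    module
  rw [integral_congr e3, intervalIntegral.integral_add hAi hGi,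
    intervalIntegral.integral_smul, integral_eq_sub_of_hasDerivAt hG hGi]
  simp only [hlam0]
  module
end

section
/- Let T > 0, let E be a real Banach space, let λ : [0,T] → ℝ be continuously differentiable with λ(0) = 0 and derivative λ′, and let k : [0,T] → E be continuously differentiable with derivative k′. Then for all s̄, t̄ ∈ [0,T]: λ(s̄)·λ(t̄)·k(s̄∧t̄) − ∫₀^{s̄∧t̄} λ(r)²·k′(r) dr = ∫₀^{s̄} ∫₀^{t̄} [ λ′(s)·λ′(t)·k(s∧t) + λ(s∧t)·λ′(s∨t)·k′(s∧t) ] dt ds. -/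
/-!
Write `g = λ' k + λ k'` for the derivative of `λ k`. The kernel factors on each side of the
diagonal: it equals `λ'(s) g(t)` for `t ≤ s` and `λ'(t) g(s)` for `s ≤ t`. Since `λ(0) = 0`,
the fundamental theorem of calculus evaluates the inner integral as
`λ'(s) λ(t̄) k(t̄)` when `t̄ ≤ s`, and as
`λ'(s) λ(s) k(s) + (λ(t̄) - λ(s)) g(s) = λ(t̄) g(s) - λ(s)² k'(s)` when `s ≤ t̄`.
Integrating in `s` over `[0, s̄]`, split at `t̄` if `t̄ ≤ s̄`, gives the identity.
-/

open MeasureTheory intervalIntegral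

/-- Identity (34) of the paper: kernel representation of
`Ũ_{s̄,t̄} = λ(s̄)λ(t̄)k(s̄∧t̄) − ∫₀^{s̄∧t̄} λ(r)²k′(r) dr`. -/
theorem stmt_3 {E : Type*} [NormedAddCommGroup E] [NormedSpace ℝ E] [CompleteSpace E]
    {T : ℝ} (hT : 0 < T) (lam lam' : ℝ → ℝ) (k k' : ℝ → E)
    (hlam : ∀ r ∈ Set.Icc (0:ℝ) T, HasDerivAt lam (lam' r) r)
    (hlam' : ContinuousOn lam' (Set.Icc 0 T))
    (hlam0 : lam 0 = 0)
    (hk : ∀ r ∈ Set.Icc (0:ℝ) T, HasDerivAt k (k' r) r)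
    (hk' : ContinuousOn k' (Set.Icc 0 T)) :
    ∀ sb ∈ Set.Icc (0:ℝ) T, ∀ tb ∈ Set.Icc (0:ℝ) T,
      (lam sb * lam tb) • k (min sb tb)
          - (∫ r in (0:ℝ)..(min sb tb), (lam r)^2 • k' r)
        = ∫ s in (0:ℝ)..sb, ∫ t in (0:ℝ)..tb,
            ((lam' s * lam' t) • k (min s t)
              + (lam (min s t) * lam' (max s t)) • k' (min s t)) := by
  -- `g` is the derivative of `λ k`.
  set g : ℝ → E := fun r => lam' r • k r + lam r • k' r with hg
  have clam : ContinuousOn lam (Set.Icc 0 T) := fun r hr =>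
    (hlam r hr).continuousAt.continuousWithinAt
  have ck : ContinuousOn k (Set.Icc 0 T) := fun r hr =>
    (hk r hr).continuousAt.continuousWithinAt
  have cg : ContinuousOn g (Set.Icc 0 T) := (hlam'.smul ck).add (clam.smul hk')
  have sub : ∀ {a b : ℝ}, 0 ≤ a → a ≤ b → b ≤ T → Set.uIcc a b ⊆ Set.Icc 0 T := by
    intro a b ha hab hb
    rw [Set.uIcc_of_le hab]
    exact Set.Icc_subset_Icc ha hb
  have int_lam' : ∀ {a b : ℝ}, 0 ≤ a → a ≤ b → b ≤ T →
      ∫ t in a..b, lam' t = lam b - lam a := fun ha hab hb =>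
    integral_eq_sub_of_hasDerivAt (fun r hr => hlam r (sub ha hab hb hr))
      (hlam'.mono (sub ha hab hb)).intervalIntegrable
  have int_g : ∀ {a b : ℝ}, 0 ≤ a → a ≤ b → b ≤ T →
      ∫ t in a..b, g t = lam b • k b - lam a • k a := fun {a b} ha hab hb =>
    integral_eq_sub_of_hasDerivAt (f := fun r => lam r • k r)
      (fun r hr => by
        have h := (hlam r (sub ha hab hb hr)).smul (hk r (sub ha hab hb hr))
        rw [add_comm] at h
        exact h)
      (cg.mono (sub ha hab hb)).intervalIntegrable
  intro sb hsb tb htb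
  obtain ⟨hs0, hsT⟩ := hsb
  obtain ⟨ht0, htT⟩ := htb
  set F : ℝ → ℝ → E := fun s t => (lam' s * lam' t) • k (min s t)
              + (lam (min s t) * lam' (max s t)) • k' (min s t) with hF
  have F_below : ∀ {s t : ℝ}, t ≤ s → F s t = lam' s • g t := by
    intro s t h
    simp only [hF, hg, min_eq_right h, max_eq_left h, smul_add, smul_smul]
    rw [mul_comm (lam t)]
  have F_above : ∀ {s t : ℝ}, s ≤ t → F s t = lam' t • g s := by
    intro s t h
    simp only [hF, hg, min_eq_left h, max_eq_right h, smul_add, smul_smul]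
    rw [mul_comm (lam s), mul_comm (lam' s)]
  have below_eqOn : ∀ {s b : ℝ}, 0 ≤ b → b ≤ s →
      Set.EqOn (F s) (fun t => lam' s • g t) (Set.uIcc 0 b) := by
    intro s b hb hbs t ht
    rw [Set.uIcc_of_le hb] at ht
    exact F_below (ht.2.trans hbs)
  have int_below : ∀ {s b : ℝ}, 0 ≤ b → b ≤ s → s ≤ T →
      ∫ t in (0:ℝ)..b, F s t = lam' s • lam b • k b := by
    intro s b hb hbs hs
    rw [integral_congr (below_eqOn hb hbs), intervalIntegral.integral_smul,
      int_g le_rfl hb (hbs.trans hs), hlam0, zero_smul, sub_zero]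
  have inner_low : ∀ {s : ℝ}, 0 ≤ s → s ≤ tb →
      ∫ t in (0:ℝ)..tb, F s t = lam tb • g s - (lam s)^2 • k' s := by
    intro s hs hst
    have e2 : Set.EqOn (F s) (fun t => lam' t • g s) (Set.uIcc s tb) := by
      intro t ht
      rw [Set.uIcc_of_le hst] at ht
      exact F_above ht.1
    -- Integrability of the kernel on both sides of the diagonal, needed to split there.
    have i1 : IntervalIntegrable (F s) volume 0 s :=
      (((cg.mono (sub le_rfl hs (hst.trans htT))).const_smul (lam' s)).congr
        (below_eqOn hs le_rfl)).intervalIntegrable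
    have i2 : IntervalIntegrable (F s) volume s tb :=
      (((hlam'.mono (sub hs hst htT)).smul continuousOn_const).congr e2).intervalIntegrable
    rw [← integral_add_adjacent_intervals i1 i2, int_below hs le_rfl (hst.trans htT),
      integral_congr e2, intervalIntegral.integral_smul_const, int_lam' hs hst htT]
    simp only [hg]
    module
  have outer_low : ∀ {b : ℝ}, 0 ≤ b → b ≤ tb →
      ∫ s in (0:ℝ)..b, ∫ t in (0:ℝ)..tb, F s t
        = (lam b * lam tb) • k b - ∫ r in (0:ℝ)..b, (lam r)^2 • k' r := by
    intro b hb hbt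
    have e : Set.EqOn (fun s => ∫ t in (0:ℝ)..tb, F s t)
        (fun s => lam tb • g s - (lam s)^2 • k' s) (Set.uIcc 0 b) := by
      intro s hs
      rw [Set.uIcc_of_le hb] at hs
      exact inner_low hs.1 (hs.2.trans hbt)
    have hsub := sub le_rfl hb (hbt.trans htT)
    rw [integral_congr e, intervalIntegral.integral_sub
      (f := fun s => lam tb • g s) (g := fun s => (lam s)^2 • k' s)
      ((cg.mono hsub).const_smul (lam tb)).intervalIntegrable
      (((clam.pow 2).smul hk').mono hsub).intervalIntegrable,
      intervalIntegral.integral_smul, int_g le_rfl hb (hbt.trans htT), hlam0]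
    module
  rcases le_total sb tb with h | h
  · rw [min_eq_left h, outer_low hs0 h]
  · have e : Set.EqOn (fun s => ∫ t in (0:ℝ)..tb, F s t)
        (fun s => lam' s • lam tb • k tb) (Set.uIcc tb sb) := by
      intro s hs
      rw [Set.uIcc_of_le h] at hs
      exact int_below ht0 hs.1 (hs.2.trans hsT)
    have e1 : Set.EqOn (fun s => ∫ t in (0:ℝ)..tb, F s t)
        (fun s => lam tb • g s - (lam s)^2 • k' s) (Set.uIcc 0 tb) := by
      intro s hs
      rw [Set.uIcc_of_le ht0] at hs
      exact inner_low hs.1 hs.2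
    have hsub := sub le_rfl ht0 htT
    have i1 : IntervalIntegrable (fun s => ∫ t in (0:ℝ)..tb, F s t) volume 0 tb :=
      ((((cg.mono hsub).const_smul (lam tb)).sub
        (((clam.pow 2).smul hk').mono hsub)).congr e1).intervalIntegrable
    have i2 : IntervalIntegrable (fun s => ∫ t in (0:ℝ)..tb, F s t) volume tb sb :=
      (((hlam'.mono (sub ht0 h hsT)).smul continuousOn_const).congr e).intervalIntegrable
    rw [min_eq_right h, ← integral_add_adjacent_intervals i1 i2, outer_low ht0 le_rfl,
      integral_congr e, intervalIntegral.integral_smul_const, int_lam' ht0 h hsT]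
    module
end
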